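/- arXiv:2205.12114 — 2 statements merged into one kernel-verified Lean document; each statement's English description precedes it below -/
import Mathlib

section
/- Every language in the Boolean closure of the languages of one-register NRAs without disequality guards is recognized by a deterministic register set automaton: if B is the smallest class of data-word languages that contains L(A) for every NRA⁼₁ A and is closed under union, intersection, and complement, then every L ∈ B satisfies L = L(D) for some DRsA D. -/
/-- A data word over alphabet `Sigma`, with data domain `𝔻 = ℕ`. -/
abbrev DataWord (Sigma : Type) : Type :=
  List (Sigma × ℕ)
/-- An update instruction of a register automaton: copy the content of register `r`,
store the current input value (`in`), or clear the register (`⊥`). -/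
inductive NRAUpd : Type where
  | reg (r : ℕ)
  | input
  | clear

/-- A transition `(src, letter, gEq, gNeq, upd, tgt)` of a register automaton. -/
structure NRATrans (Sigma : Type) where
  src : ℕ
  letter : Sigma
  gEq : Finset ℕ
  gNeq : Finset ℕ
  upd : ℕ → NRAUpd
  tgt : ℕ

/-- The register assignment obtained after taking transition `t` with current input
data value `d`, starting from the assignment `f`. -/
def NRATrans.apply {Sigma : Type} (t : NRATrans Sigma) (f : ℕ → Option ℕ) (d : ℕ) :
    ℕ → Option ℕ := fun r =>
  match t.upd r with
  | NRAUpd.reg r' => f r'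
  | NRAUpd.input => some d
  | NRAUpd.clear => none

/-- A (nondeterministic) register automaton; states and registers are drawn from `ℕ`. -/
structure NRA (Sigma : Type) where
  Q : Finset ℕ
  R : Finset ℕ
  Δ : Set (NRATrans Sigma)
  I : Finset ℕ
  F : Finset ℕ
  finite_trans : Δ.Finite
  I_sub : I ⊆ Q
  F_sub : F ⊆ Q
  wf : ∀ t ∈ Δ, t.src ∈ Q ∧ t.tgt ∈ Q ∧ t.gEq ⊆ R ∧ t.gNeq ⊆ R ∧
    Disjoint t.gEq t.gNeq ∧ ∀ r ∈ R, ∀ r' : ℕ, t.upd r = NRAUpd.reg r' → r' ∈ R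

/-- One step of an NRA from configuration `c` to configuration `c'`, reading
the letter `x`. -/
def NRA.Step {Sigma : Type} (A : NRA Sigma) (c : ℕ × (ℕ → Option ℕ)) (x : Sigma × ℕ)
    (c' : ℕ × (ℕ → Option ℕ)) : Prop :=
  ∃ t ∈ A.Δ, t.src = c.1 ∧ t.letter = x.1 ∧
    (∀ r ∈ t.gEq, c.2 r = some x.2) ∧ (∀ r ∈ t.gNeq, c.2 r ≠ some x.2) ∧
    c' = (t.tgt, t.apply c.2 x.2)

/-- `A.Run c w c'` holds iff `A` can read the data word `w` going from
configuration `c` to configuration `c'`. -/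
inductive NRA.Run {Sigma : Type} (A : NRA Sigma) :
    (ℕ × (ℕ → Option ℕ)) → DataWord Sigma → (ℕ × (ℕ → Option ℕ)) → Prop where
  | nil (c : ℕ × (ℕ → Option ℕ)) : NRA.Run A c [] c
  | cons {c c' c'' : ℕ × (ℕ → Option ℕ)} {x : Sigma × ℕ} {w : DataWord Sigma} :
      A.Step c x c' → NRA.Run A c' w c'' → NRA.Run A c (x :: w) c''

/-- The language of an NRA: words on which there exists an accepting run
starting from some initial state with all registers empty (`⊥`). -/
def NRA.Lang {Sigma : Type} (A : NRA Sigma) : Set (DataWord Sigma) :=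
  { w | ∃ q₀ ∈ A.I, ∃ c : ℕ × (ℕ → Option ℕ),
      A.Run (q₀, fun _ => none) w c ∧ c.1 ∈ A.F }

/-- The language of a universal register automaton (same syntax as an NRA):
a data word `w` is accepted iff every run of the automaton on `w` is accepting,
where a run that gets stuck before reading all of `w` counts as non-accepting.
Equivalently: every partial run on a proper prefix of `w` can be extended, and
every run reading all of `w` ends in a final state. -/
def NRA.URALang {Sigma : Type} (A : NRA Sigma) : Set (DataWord Sigma) :=
  { w | ∀ q₀ ∈ A.I, ∀ u v : DataWord Sigma, w = u ++ v →
      ∀ c : ℕ × (ℕ → Option ℕ), A.Run (q₀, fun _ => none) u c →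
        (v = [] → c.1 ∈ A.F) ∧
        ∀ x v', v = x :: v' → ∃ c', A.Step c x c' }
/-- A transition `(src, letter, gIn, gNin, upd, tgt)` of a register set automaton.
In the update, `none` stands for the current input value `in`, and `some r`
for register `r`. -/
structure RsATrans (Sigma : Type) where
  src : ℕ
  letter : Sigma
  gIn : Finset ℕ
  gNin : Finset ℕ
  upd : ℕ → Finset (Option ℕ)
  tgt : ℕ

/-- The register assignment obtained after taking transition `t` with current input
data value `d`, starting from the assignment `f`: each register gets the union of
the contents of the registers in its update set, together with `{d}` if the update
set contains `in`. -/
def RsATrans.apply {Sigma : Type} (t : RsATrans Sigma) (f : ℕ → Finset ℕ) (d : ℕ) :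
    ℕ → Finset ℕ := fun r =>
  (t.upd r).biUnion fun o =>
    match o with
    | none => {d}
    | some r' => f r'

/-- A register set automaton (RsA); states and registers are drawn from `ℕ`. -/
structure RsA (Sigma : Type) where
  Q : Finset ℕ
  R : Finset ℕ
  Δ : Set (RsATrans Sigma)
  I : Finset ℕ
  F : Finset ℕ
  finite_trans : Δ.Finite
  I_sub : I ⊆ Q
  F_sub : F ⊆ Q
  wf : ∀ t ∈ Δ, t.src ∈ Q ∧ t.tgt ∈ Q ∧ t.gIn ⊆ R ∧ t.gNin ⊆ R ∧
    Disjoint t.gIn t.gNin ∧ ∀ r ∈ R, ∀ r' : ℕ, some r' ∈ t.upd r → r' ∈ R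

/-- One step of an RsA from configuration `c` to configuration `c'`, reading
the letter `x`. -/
def RsA.Step {Sigma : Type} (A : RsA Sigma) (c : ℕ × (ℕ → Finset ℕ)) (x : Sigma × ℕ)
    (c' : ℕ × (ℕ → Finset ℕ)) : Prop :=
  ∃ t ∈ A.Δ, t.src = c.1 ∧ t.letter = x.1 ∧
    (∀ r ∈ t.gIn, x.2 ∈ c.2 r) ∧ (∀ r ∈ t.gNin, x.2 ∉ c.2 r) ∧
    c' = (t.tgt, t.apply c.2 x.2)

/-- `A.Run c w c'` holds iff `A` can read the data word `w` going from
configuration `c` to configuration `c'`. -/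
inductive RsA.Run {Sigma : Type} (A : RsA Sigma) :
    (ℕ × (ℕ → Finset ℕ)) → DataWord Sigma → (ℕ × (ℕ → Finset ℕ)) → Prop where
  | nil (c : ℕ × (ℕ → Finset ℕ)) : RsA.Run A c [] c
  | cons {c c' c'' : ℕ × (ℕ → Finset ℕ)} {x : Sigma × ℕ} {w : DataWord Sigma} :
      A.Step c x c' → RsA.Run A c' w c'' → RsA.Run A c (x :: w) c''

/-- The language of an RsA: words on which there exists an accepting run
starting from some initial state with all registers empty. -/
def RsA.Lang {Sigma : Type} (A : RsA Sigma) : Set (DataWord Sigma) :=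
  { w | ∃ q₀ ∈ A.I, ∃ c : ℕ × (ℕ → Finset ℕ),
      A.Run (q₀, fun _ => ∅) w c ∧ c.1 ∈ A.F }
/-- An RsA is deterministic (a DRsA) iff any two distinct transitions from the same
state over the same letter have incompatible guards. -/
def RsA.Deterministic {Sigma : Type} (A : RsA Sigma) : Prop :=
  ∀ t₁ ∈ A.Δ, ∀ t₂ ∈ A.Δ, t₁ ≠ t₂ → t₁.src = t₂.src → t₁.letter = t₂.letter →
    (t₁.gIn ∩ t₂.gNin).Nonempty ∨ (t₂.gIn ∩ t₁.gNin).Nonempty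

/-- The Boolean closure of the languages of NRAs with at most one register and no
disequality guards: the smallest class containing those languages and closed under
union, intersection, and complement. -/
inductive BoolClosureNRAeq1 (Sigma : Type) : Set (DataWord Sigma) → Prop where
  | base (A : NRA Sigma) (hreg : A.R.card ≤ 1) (hneq : ∀ t ∈ A.Δ, t.gNeq = ∅) :
      BoolClosureNRAeq1 Sigma (NRA.Lang A)
  | union {L₁ L₂ : Set (DataWord Sigma)} :
      BoolClosureNRAeq1 Sigma L₁ → BoolClosureNRAeq1 Sigma L₂ →
      BoolClosureNRAeq1 Sigma (L₁ ∪ L₂)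
  | inter {L₁ L₂ : Set (DataWord Sigma)} :
      BoolClosureNRAeq1 Sigma L₁ → BoolClosureNRAeq1 Sigma L₂ →
      BoolClosureNRAeq1 Sigma (L₁ ∩ L₂)
  | compl {L : Set (DataWord Sigma)} :
      BoolClosureNRAeq1 Sigma L → BoolClosureNRAeq1 Sigma Lᶜ

/-!
The subset construction turns a one-register automaton into a deterministic set automaton. Its
control state is the set of control states of the reachable configurations, and it has one set
register for each control state `q`, holding the data values that occur in the register of some
reachable configuration with control state `q`. Without disequality guards this information
suffices. A transition guarded by equality can be taken from `q` exactly when the input value is in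
the register of `q`, and an unguarded one exactly when `q` is in the current subset; in neither
case does it matter which further values accompany `q`. Complete deterministic set automata are
closed under Boolean operations by complementing acceptance and by products.
-/

/-- A complete deterministic register set automaton with states `S` and registers `R`. Instead of
a set of guarded transitions it has functions of the current state, the letter and the set of those
registers that contain the input value. As in `RsATrans`, `none` in an update is the input value. -/
structure RegisterSetMachine (Sigma S R : Type*) where
  next : S → Sigma → Set R → S
  upd : S → Sigma → Set R → R → Set (Option R)
  start : S
  accept : Set S

namespace RegisterSetMachine

variable {Sigma : Type} {S R S' R' : Type*}

/-- One step of the machine. Register contents are stored transposed: the second component of a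
configuration maps a data value to the set of registers containing it. -/
def step (M : RegisterSetMachine Sigma S R) (c : S × (ℕ → Set R)) (x : Sigma × ℕ) :
    S × (ℕ → Set R) :=
  (M.next c.1 x.1 (c.2 x.2), fun e => { r |
    none ∈ M.upd c.1 x.1 (c.2 x.2) r ∧ e = x.2 ∨
      ∃ r', some r' ∈ M.upd c.1 x.1 (c.2 x.2) r ∧ r' ∈ c.2 e })

/-- The configuration reached after reading a data word from the start state with empty
registers. -/
def eval (M : RegisterSetMachine Sigma S R) (w : DataWord Sigma) : S × (ℕ → Set R) :=
  w.foldl M.step (M.start, fun _ => ∅)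

/-- The language of a machine. -/
def lang (M : RegisterSetMachine Sigma S R) : Set (DataWord Sigma) :=
  { w | (M.eval w).1 ∈ M.accept }

theorem eval_concat (M : RegisterSetMachine Sigma S R) (w : DataWord Sigma) (x : Sigma × ℕ) :
    M.eval (w ++ [x]) = M.step (M.eval w) x :=
  List.foldl_concat ..

/-- The machine with complemented acceptance, which recognizes the complement. -/
def compl (M : RegisterSetMachine Sigma S R) : RegisterSetMachine Sigma S R :=
  { M with accept := M.acceptᶜ }

theorem lang_compl (M : RegisterSetMachine Sigma S R) : M.compl.lang = M.langᶜ :=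
  rfl

section Prod

variable (M : RegisterSetMachine Sigma S R) (N : RegisterSetMachine Sigma S' R')

/-- The product machine, which runs two machines in parallel on disjoint registers and recognizes
the intersection of their languages. -/
def prod : RegisterSetMachine Sigma (S × S') (R ⊕ R') where
  next s a P := (M.next s.1 a (Sum.inl ⁻¹' P), N.next s.2 a (Sum.inr ⁻¹' P))
  upd s a P := Sum.elim
    (fun r => Option.map Sum.inl '' M.upd s.1 a (Sum.inl ⁻¹' P) r)
    (fun r => Option.map Sum.inr '' N.upd s.2 a (Sum.inr ⁻¹' P) r)
  start := (M.start, N.start)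
  accept := M.accept ×ˢ N.accept

theorem prod_eval_fst (w : DataWord Sigma) :
    (((M.prod N).eval w).1.1, fun e => Sum.inl ⁻¹' ((M.prod N).eval w).2 e) = M.eval w := by
  refine (List.foldl_hom (fun c : (S × S') × (ℕ → Set (R ⊕ R')) =>
    (c.1.1, fun e => Sum.inl ⁻¹' c.2 e)) fun c x => Prod.ext rfl ?_).symm
  ext e r
  simp [step, prod]

theorem prod_eval_snd (w : DataWord Sigma) :
    (((M.prod N).eval w).1.2, fun e => Sum.inr ⁻¹' ((M.prod N).eval w).2 e) = N.eval w := by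
  refine (List.foldl_hom (fun c : (S × S') × (ℕ → Set (R ⊕ R')) =>
    (c.1.2, fun e => Sum.inr ⁻¹' c.2 e)) fun c x => Prod.ext rfl ?_).symm
  ext e r
  simp [step, prod]

theorem lang_prod : (M.prod N).lang = M.lang ∩ N.lang := by
  ext w
  change _ ∈ M.accept ∧ _ ∈ N.accept ↔ (M.eval w).1 ∈ M.accept ∧ (N.eval w).1 ∈ N.accept
  rw [← M.prod_eval_fst N, ← M.prod_eval_snd N]

end Prod

end RegisterSetMachine

theorem RsATrans.mem_apply {Sigma : Type} (t : RsATrans Sigma) (f : ℕ → Finset ℕ) (d e r : ℕ) :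
    e ∈ t.apply f d r ↔ none ∈ t.upd r ∧ e = d ∨ ∃ r', some r' ∈ t.upd r ∧ e ∈ f r' := by
  simp [RsATrans.apply, Option.exists]

namespace RsA

variable {Sigma : Type} {D : RsA Sigma}

theorem Deterministic.step_unique (hD : D.Deterministic) {c c₁ c₂ : ℕ × (ℕ → Finset ℕ)}
    {x : Sigma × ℕ} (h₁ : D.Step c x c₁) (h₂ : D.Step c x c₂) : c₁ = c₂ := by
  obtain ⟨t₁, ht₁, hsrc₁, hletter₁, hin₁, hnin₁, rfl⟩ := h₁
  obtain ⟨t₂, ht₂, hsrc₂, hletter₂, hin₂, hnin₂, rfl⟩ := h₂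
  suffices h : t₁ = t₂ by rw [h]
  by_contra hne
  rcases hD t₁ ht₁ t₂ ht₂ hne (hsrc₁.trans hsrc₂.symm) (hletter₁.trans hletter₂.symm) with
    ⟨r, hr⟩ | ⟨r, hr⟩ <;> rw [Finset.mem_inter] at hr
  · exact hnin₂ r hr.2 (hin₁ r hr.1)
  · exact hnin₁ r hr.2 (hin₂ r hr.1)

theorem Deterministic.run_unique (hD : D.Deterministic) {c c₁ c₂ : ℕ × (ℕ → Finset ℕ)}
    {w : DataWord Sigma} (h₁ : D.Run c w c₁) (h₂ : D.Run c w c₂) : c₁ = c₂ := by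
  induction h₁ with
  | nil => cases h₂; rfl
  | cons hstep₁ _ ih =>
    cases h₂ with
    | cons hstep₂ hrun₂ =>
      obtain rfl := hD.step_unique hstep₁ hstep₂
      exact ih hrun₂

end RsA

namespace RegisterSetMachine

variable {Sigma : Type} {S R : Type*} (M : RegisterSetMachine Sigma S R) (eS : S ↪ ℕ) (eR : R ↪ ℕ)

/-- The transition of `M.toRsA eS eR` taken in a given state on a given letter when the registers
containing the input value are exactly those in the given set. -/
noncomputable def toRsATrans [Finite R] (p : S × Sigma × Set R) : RsATrans Sigma where
  src := eS p.1
  letter := p.2.1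
  gIn := (Set.toFinite (eR '' p.2.2)).toFinset
  gNin := (Set.toFinite (eR '' p.2.2ᶜ)).toFinset
  upd := Function.extend eR
    (fun r => (Set.toFinite (Option.map eR '' M.upd p.1 p.2.1 p.2.2 r)).toFinset) fun _ => ∅
  tgt := eS (M.next p.1 p.2.1 p.2.2)

variable {M eR} in
theorem mem_upd_toRsATrans [Finite R] {p : S × Sigma × Set R} {r : R} {o : Option ℕ} :
    o ∈ (M.toRsATrans eS eR p).upd (eR r) ↔ o ∈ Option.map eR '' M.upd p.1 p.2.1 p.2.2 r := by
  simp only [toRsATrans, eR.injective.extend_apply, Set.Finite.mem_toFinset]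

/-- The register set automaton obtained from a machine by numbering its states and registers. -/
noncomputable def toRsA [Finite Sigma] [Finite S] [Finite R] : RsA Sigma where
  Q := (Set.finite_range eS).toFinset
  R := (Set.finite_range eR).toFinset
  Δ := Set.range (M.toRsATrans eS eR)
  I := {eS M.start}
  F := (Set.toFinite (eS '' M.accept)).toFinset
  finite_trans := Set.finite_range _
  I_sub := by simp
  F_sub := Set.Finite.toFinset_mono (Set.image_subset_range _ _)
  wf := by
    rintro _ ⟨p, rfl⟩
    refine ⟨by simp [toRsATrans], by simp [toRsATrans],
      Set.Finite.toFinset_mono (Set.image_subset_range _ _),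
      Set.Finite.toFinset_mono (Set.image_subset_range _ _), ?_, ?_⟩
    · rw [toRsATrans, Set.Finite.disjoint_toFinset]
      exact (Set.disjoint_image_iff eR.injective).2 disjoint_compl_right
    · simp only [Set.Finite.mem_toFinset]
      rintro _ ⟨r, rfl⟩ r' hr'
      obtain ⟨o, -, ho⟩ := (mem_upd_toRsATrans eS).1 hr'
      obtain ⟨j, -, hj⟩ := Option.map_eq_some_iff.1 ho
      exact ⟨j, hj⟩

/-- The configuration `C` of an automaton with numbered states and registers represents the
machine configuration `c`. -/
def Represents (c : S × (ℕ → Set R)) (C : ℕ × (ℕ → Finset ℕ)) : Prop :=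
  C.1 = eS c.1 ∧ ∀ r e, e ∈ C.2 (eR r) ↔ r ∈ c.2 e

section ToRsA

variable [Finite Sigma] [Finite S] [Finite R]

theorem toRsA_deterministic : (M.toRsA eS eR).Deterministic := by
  rintro _ ⟨⟨s, a, P⟩, rfl⟩ _ ⟨⟨s', a', P'⟩, rfl⟩ hne hs (rfl : a = a')
  obtain rfl : s = s' := eS.injective hs
  have hP : P ≠ P' := by
    rintro rfl
    exact hne rfl
  rcases not_and_or.1 (mt Set.Subset.antisymm_iff.2 hP) with h | h <;>
    obtain ⟨r, hr, hr'⟩ := Set.not_subset.1 h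
  · exact .inl ⟨eR r, by simp [toRsATrans, hr, hr']⟩
  · exact .inr ⟨eR r, by simp [toRsATrans, hr, hr']⟩

variable {M eS eR}

theorem Represents.exists_step {c : S × (ℕ → Set R)} {C : ℕ × (ℕ → Finset ℕ)}
    (h : Represents eS eR c C) (x : Sigma × ℕ) :
    ∃ C', (M.toRsA eS eR).Step C x C' ∧ Represents eS eR (M.step c x) C' := by
  let t := M.toRsATrans eS eR (c.1, x.1, c.2 x.2)
  refine ⟨(t.tgt, t.apply C.2 x.2),
    ⟨t, ⟨_, rfl⟩, h.1.symm, rfl, ?guardIn, ?guardNin, rfl⟩, rfl, fun r e => ?content⟩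
  case guardIn => simp [t, toRsATrans, h.2]
  case guardNin => simp [t, toRsATrans, h.2]
  case content =>
    rw [RsATrans.mem_apply]
    simp [t, mem_upd_toRsATrans, step, h.2, Option.exists]

theorem Represents.exists_run {c : S × (ℕ → Set R)} {C : ℕ × (ℕ → Finset ℕ)}
    (h : Represents eS eR c C) (w : DataWord Sigma) :
    ∃ C', (M.toRsA eS eR).Run C w C' ∧ Represents eS eR (w.foldl M.step c) C' := by
  induction w generalizing c C with
  | nil => exact ⟨C, .nil C, h⟩
  | cons x w ih =>
    obtain ⟨C₁, hstep, h₁⟩ := h.exists_step (M := M) x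
    obtain ⟨C₂, hrun, h₂⟩ := ih h₁
    exact ⟨C₂, .cons hstep hrun, h₂⟩

variable (M eS eR)

theorem toRsA_lang : (M.toRsA eS eR).Lang = M.lang := by
  ext w
  have hstart : Represents eS eR (M.start, fun _ => ∅) (eS M.start, fun _ => ∅) :=
    ⟨rfl, by simp⟩
  obtain ⟨C, hrun, hC⟩ := hstart.exists_run (M := M) w
  have haccept : C.1 ∈ (M.toRsA eS eR).F ↔ w ∈ M.lang := by
    rw [hC.1]
    simp [toRsA, lang, eval]
  constructor
  · rintro ⟨q₀, hq₀, C', hrun', hC'⟩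
    obtain rfl := Finset.mem_singleton.1 hq₀
    obtain rfl := (M.toRsA_deterministic eS eR).run_unique hrun' hrun
    exact haccept.1 hC'
  · exact fun hw => ⟨_, Finset.mem_singleton_self _, C, hrun, haccept.2 hw⟩

end ToRsA

end RegisterSetMachine

/-- A language is recognized by a complete deterministic register set automaton with finitely many
states and registers. -/
def IsMachineRecognizable {Sigma : Type} (L : Set (DataWord Sigma)) : Prop :=
  ∃ (S R : Type) (_ : Finite S) (_ : Finite R) (M : RegisterSetMachine Sigma S R), M.lang = L

namespace IsMachineRecognizable

variable {Sigma : Type} {L L₁ L₂ : Set (DataWord Sigma)}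

theorem compl : IsMachineRecognizable L → IsMachineRecognizable Lᶜ := by
  rintro ⟨S, R, hS, hR, M, rfl⟩
  exact ⟨S, R, hS, hR, M.compl, M.lang_compl⟩

theorem inter : IsMachineRecognizable L₁ → IsMachineRecognizable L₂ →
    IsMachineRecognizable (L₁ ∩ L₂) := by
  rintro ⟨S, R, _, _, M, rfl⟩ ⟨S', R', _, _, N, rfl⟩
  exact ⟨S × S', R ⊕ R', inferInstance, inferInstance, M.prod N, M.lang_prod N⟩

theorem union (h₁ : IsMachineRecognizable L₁) (h₂ : IsMachineRecognizable L₂) :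
    IsMachineRecognizable (L₁ ∪ L₂) := by
  rw [Set.union_eq_compl_compl_inter_compl]
  exact (h₁.compl.inter h₂.compl).compl

theorem exists_deterministic_rsA [Finite Sigma] (h : IsMachineRecognizable L) :
    ∃ D : RsA Sigma, D.Deterministic ∧ D.Lang = L := by
  obtain ⟨S, R, _, _, M, rfl⟩ := h
  obtain ⟨eS⟩ := nonempty_embedding_nat S
  obtain ⟨eR⟩ := nonempty_embedding_nat R
  exact ⟨M.toRsA eS eR, M.toRsA_deterministic eS eR, M.toRsA_lang eS eR⟩

end IsMachineRecognizable

namespace NRA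

variable {Sigma : Type} (A : NRA Sigma)

/-- Some register of `A` holds the data value `e`. -/
def Holds (f : ℕ → Option ℕ) (e : ℕ) : Prop :=
  ∃ r ∈ A.R, f r = some e

/-- The transition stores the input value in some register of `A`. -/
def Stores (t : NRATrans Sigma) : Prop :=
  ∃ r ∈ A.R, t.upd r = .input

/-- The transition copies a register into some register of `A`; if `A` has only one register, it
keeps the content of that register. -/
def Keeps (t : NRATrans Sigma) : Prop :=
  ∃ r ∈ A.R, ∃ r', t.upd r = .reg r'

/-- The set of configurations `A` can reach by reading `w`. -/
def reach (w : DataWord Sigma) : Set (ℕ × (ℕ → Option ℕ)) :=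
  { c | ∃ q₀ ∈ A.I, A.Run (q₀, fun _ => none) w c }

variable {A}

theorem mem_lang_iff {w : DataWord Sigma} : w ∈ A.Lang ↔ ∃ c ∈ A.reach w, c.1 ∈ A.F :=
  ⟨fun ⟨q₀, hq₀, c, hrun, hc⟩ => ⟨c, ⟨q₀, hq₀, hrun⟩, hc⟩,
    fun ⟨c, ⟨q₀, hq₀, hrun⟩, hc⟩ => ⟨q₀, hq₀, c, hrun, hc⟩⟩

theorem mem_reach_nil {c : ℕ × (ℕ → Option ℕ)} :
    c ∈ A.reach [] ↔ c.1 ∈ A.I ∧ c.2 = fun _ => none := by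
  constructor
  · rintro ⟨q₀, hq₀, ⟨⟩⟩
    exact ⟨hq₀, rfl⟩
  · rintro ⟨hc, hempty⟩
    exact ⟨c.1, hc, hempty ▸ .nil c⟩

theorem run_concat_iff {c c'' : ℕ × (ℕ → Option ℕ)} {w : DataWord Sigma} {x : Sigma × ℕ} :
    A.Run c (w ++ [x]) c'' ↔ ∃ c', A.Run c w c' ∧ A.Step c' x c'' := by
  induction w generalizing c with
  | nil =>
    constructor
    · rintro (_ | ⟨hstep, ⟨⟩⟩)
      exact ⟨c, .nil c, hstep⟩
    · rintro ⟨_, ⟨⟩, hstep⟩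
      exact .cons hstep (.nil c'')
  | cons y w ih =>
    constructor
    · rintro (_ | ⟨hstep, hrun⟩)
      obtain ⟨c', hrun', hlast⟩ := ih.1 hrun
      exact ⟨c', .cons hstep hrun', hlast⟩
    · rintro ⟨c', _ | ⟨hstep, hrun⟩, hlast⟩
      exact .cons hstep (ih.2 ⟨c', hrun, hlast⟩)

theorem mem_reach_concat {c' : ℕ × (ℕ → Option ℕ)} {w : DataWord Sigma} {x : Sigma × ℕ} :
    c' ∈ A.reach (w ++ [x]) ↔ ∃ c ∈ A.reach w, A.Step c x c' := by
  simp only [reach, run_concat_iff, Set.mem_ofPred_eq]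
  tauto

section OneRegister

variable (hR : A.R.card ≤ 1)
include hR

theorem Holds.unique {f : ℕ → Option ℕ} {d e : ℕ} (hd : A.Holds f d) (he : A.Holds f e) :
    d = e := by
  obtain ⟨r, hr, hd⟩ := hd
  obtain ⟨r', hr', he⟩ := he
  obtain rfl := Finset.card_le_one.1 hR r hr r' hr'
  exact Option.some.inj (hd.symm.trans he)

theorem holds_apply_iff {t : NRATrans Sigma} (ht : t ∈ A.Δ) {f : ℕ → Option ℕ} {d e : ℕ} :
    A.Holds (t.apply f d) e ↔ A.Stores t ∧ e = d ∨ A.Keeps t ∧ A.Holds f e := by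
  have hwf := (A.wf t ht).2.2.2.2.2
  constructor
  · rintro ⟨r, hr, he⟩
    unfold NRATrans.apply at he
    split at he
    case h_1 r' hupd => exact .inr ⟨⟨r, hr, r', hupd⟩, r', hwf r hr r' hupd, he⟩
    case h_2 hupd => exact .inl ⟨⟨r, hr, hupd⟩, (Option.some.inj he).symm⟩
    case h_3 => cases he
  · rintro (⟨⟨r, hr, hupd⟩, rfl⟩ | ⟨⟨r, hr, r', hupd⟩, r'', hr'', he⟩)
    · exact ⟨r, hr, by simp only [NRATrans.apply, hupd]⟩
    · obtain rfl := Finset.card_le_one.1 hR r' (hwf r hr r' hupd) r'' hr''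
      exact ⟨r, hr, by simp only [NRATrans.apply, hupd, he]⟩

theorem forall_gEq_iff {t : NRATrans Sigma} (ht : t ∈ A.Δ) {f : ℕ → Option ℕ} {d : ℕ} :
    (∀ r ∈ t.gEq, f r = some d) ↔ (t.gEq.Nonempty → A.Holds f d) := by
  have hsub : t.gEq ⊆ A.R := (A.wf t ht).2.2.1
  constructor
  · rintro h ⟨r, hr⟩
    exact ⟨r, hsub hr, h r hr⟩
  · intro h r hr
    obtain ⟨r', hr', hd⟩ := h ⟨r, hr⟩
    rwa [Finset.card_le_one.1 hR r (hsub hr) r' hr']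

theorem step_iff (hneq : ∀ t ∈ A.Δ, t.gNeq = ∅) {c c' : ℕ × (ℕ → Option ℕ)} {x : Sigma × ℕ} :
    A.Step c x c' ↔ ∃ t ∈ A.Δ, t.src = c.1 ∧ t.letter = x.1 ∧
      (t.gEq.Nonempty → A.Holds c.2 x.2) ∧ c' = (t.tgt, t.apply c.2 x.2) := by
  refine exists_congr fun t => and_congr_right fun ht => ?_
  simp [forall_gEq_iff hR ht, hneq t ht]

end OneRegister

variable (A)

/-- In the subset construction, some state of the current subset `U` has the `a`-transition `t` to
`s` enabled; `P` consists of the states whose register contains the input value. -/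
def Fires (U : Set A.Q) (a : Sigma) (P : Set A.Q) (t : NRATrans Sigma) (s : A.Q) : Prop :=
  t ∈ A.Δ ∧ t.letter = a ∧ t.tgt = s ∧ ∃ q ∈ U, t.src = q ∧ (t.gEq.Nonempty → q ∈ P)

/-- In the subset construction, the register of `q` flows into that of `s` on the letter `a`. -/
def Inherits (a : Sigma) (q s : A.Q) : Prop :=
  ∃ t ∈ A.Δ, t.letter = a ∧ t.tgt = s ∧ t.src = q ∧ t.gEq = ∅ ∧ A.Keeps t

/-- The subset construction for automata with at most one register. A transition that keeps the
register after an equality test is treated as storing the input value, because the test leaves only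
that value. -/
def subsetMachine : RegisterSetMachine Sigma (Set A.Q) A.Q where
  next U a P := { s | ∃ t, A.Fires U a P t s }
  upd U a P s := { o | o.elim
    (∃ t, A.Fires U a P t s ∧ (A.Stores t ∨ A.Keeps t ∧ t.gEq.Nonempty)) (A.Inherits a · s) }
  start := { q | ↑q ∈ A.I }
  accept := { U | ∃ q ∈ U, ↑q ∈ A.F }

/-- The control states occurring in a set `Y` of configurations and, for each data value, the
control states that occur in `Y` together with this value. -/
def summary (Y : Set (ℕ × (ℕ → Option ℕ))) : Set A.Q × (ℕ → Set A.Q) :=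
  ({ q | ∃ f, (↑q, f) ∈ Y }, fun e => { q | ∃ f, (↑q, f) ∈ Y ∧ A.Holds f e })

variable {A}

theorem fires_summary_iff {Y : Set (ℕ × (ℕ → Option ℕ))} {a : Sigma} {d : ℕ}
    {t : NRATrans Sigma} {s : A.Q} :
    A.Fires (A.summary Y).1 a ((A.summary Y).2 d) t s ↔ t ∈ A.Δ ∧ t.letter = a ∧ t.tgt = s ∧
      ∃ f, (t.src, f) ∈ Y ∧ (t.gEq.Nonempty → A.Holds f d) := by
  refine and_congr_right fun ht => and_congr_right fun _ => and_congr_right fun _ => ?_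
  constructor
  · rintro ⟨q, ⟨f, hf⟩, hsrc, hguard⟩
    rw [hsrc]
    by_cases hg : t.gEq.Nonempty
    · obtain ⟨f', hf', hd⟩ := hguard hg
      exact ⟨f', hf', fun _ => hd⟩
    · exact ⟨f, hf, fun h => absurd h hg⟩
  · rintro ⟨f, hf, hguard⟩
    exact ⟨⟨t.src, (A.wf t ht).1⟩, ⟨f, hf⟩, rfl, fun hg => ⟨f, hf, hguard hg⟩⟩

section Simulation

variable (hR : A.R.card ≤ 1) (hneq : ∀ t ∈ A.Δ, t.gNeq = ∅)
include hR hneq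

theorem mem_summary_reach_concat_fst {w : DataWord Sigma} {x : Sigma × ℕ} {s : A.Q} :
    s ∈ (A.summary (A.reach (w ++ [x]))).1 ↔
      ∃ t, A.Fires (A.summary (A.reach w)).1 x.1 ((A.summary (A.reach w)).2 x.2) t s := by
  simp only [fires_summary_iff]
  constructor
  · rintro ⟨f', hf'⟩
    obtain ⟨⟨q, f⟩, hf, hstep⟩ := mem_reach_concat.1 hf'
    obtain ⟨t, ht, rfl, hletter, hguard, heq⟩ := (step_iff hR hneq).1 hstep
    exact ⟨t, ht, hletter, (congrArg Prod.fst heq).symm, f, hf, hguard⟩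
  · rintro ⟨t, ht, hletter, htgt, f, hf, hguard⟩
    exact ⟨_, mem_reach_concat.2 ⟨_, hf,
      (step_iff hR hneq).2 ⟨t, ht, rfl, hletter, hguard, by rw [htgt]⟩⟩⟩

theorem mem_summary_reach_concat_snd {w : DataWord Sigma} {x : Sigma × ℕ} {s : A.Q} {e : ℕ} :
    s ∈ (A.summary (A.reach (w ++ [x]))).2 e ↔
      (∃ t, A.Fires (A.summary (A.reach w)).1 x.1 ((A.summary (A.reach w)).2 x.2) t s ∧
        (A.Stores t ∨ A.Keeps t ∧ t.gEq.Nonempty)) ∧ e = x.2 ∨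
      ∃ q, A.Inherits x.1 q s ∧ q ∈ (A.summary (A.reach w)).2 e := by
  simp only [fires_summary_iff]
  constructor
  · rintro ⟨f', hf', he⟩
    obtain ⟨⟨q, f⟩, hf, hstep⟩ := mem_reach_concat.1 hf'
    obtain ⟨t, ht, rfl, hletter, hguard, heq⟩ := (step_iff hR hneq).1 hstep
    obtain ⟨htgt, rfl⟩ := Prod.mk.inj heq
    rcases (holds_apply_iff hR ht).1 he with ⟨hstores, rfl⟩ | ⟨hkeeps, he⟩
    · exact .inl ⟨⟨t, ⟨ht, hletter, htgt.symm, f, hf, hguard⟩, .inl hstores⟩, rfl⟩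
    rcases t.gEq.eq_empty_or_nonempty with hg | hg
    · exact .inr ⟨⟨t.src, (A.wf t ht).1⟩, ⟨t, ht, hletter, htgt.symm, rfl, hg, hkeeps⟩, f, hf, he⟩
    · exact .inl ⟨⟨t, ⟨ht, hletter, htgt.symm, f, hf, hguard⟩, .inr ⟨hkeeps, hg⟩⟩,
        he.unique hR (hguard hg)⟩
  · have reaches {t f} (ht : t ∈ A.Δ) (hletter : t.letter = x.1) (htgt : t.tgt = s)
        (hf : (t.src, f) ∈ A.reach w) (hguard : t.gEq.Nonempty → A.Holds f x.2) :
        (↑s, t.apply f x.2) ∈ A.reach (w ++ [x]) :=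
      mem_reach_concat.2 ⟨_, hf, (step_iff hR hneq).2 ⟨t, ht, rfl, hletter, hguard, by rw [htgt]⟩⟩
    rintro (⟨⟨t, ⟨ht, hletter, htgt, f, hf, hguard⟩, hupd⟩, rfl⟩ |
      ⟨q, ⟨t, ht, hletter, htgt, hsrc, hg, hkeeps⟩, f, hf, he⟩)
    · exact ⟨_, reaches ht hletter htgt hf hguard, (holds_apply_iff hR ht).2 <|
        hupd.imp (⟨·, rfl⟩) fun ⟨hkeeps, hg⟩ => ⟨hkeeps, hguard hg⟩⟩
    · exact ⟨_, reaches ht hletter htgt (hsrc ▸ hf) (by simp [hg]),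
        (holds_apply_iff hR ht).2 (.inr ⟨hkeeps, he⟩)⟩

theorem subsetMachine_eval (w : DataWord Sigma) :
    A.subsetMachine.eval w = A.summary (A.reach w) := by
  induction w using List.reverseRecOn with
  | nil =>
    refine Prod.ext (Set.ext fun q => ?_) (funext fun e => Set.ext fun q => ?_) <;>
      simp [RegisterSetMachine.eval, subsetMachine, summary, mem_reach_nil, Holds]
  | append_singleton w x ih =>
    rw [RegisterSetMachine.eval_concat, ih]
    exact Prod.ext (Set.ext fun _ => (mem_summary_reach_concat_fst hR hneq).symm)
      (funext fun _ => Set.ext fun _ => (mem_summary_reach_concat_snd hR hneq).symm)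

theorem subsetMachine_lang : A.subsetMachine.lang = A.Lang := by
  ext w
  rw [mem_lang_iff, RegisterSetMachine.lang, Set.mem_ofPred_eq, subsetMachine_eval hR hneq]
  constructor
  · rintro ⟨q, ⟨f, hf⟩, hq⟩
    exact ⟨_, hf, hq⟩
  · rintro ⟨⟨q, f⟩, hf, hq⟩
    exact ⟨⟨q, A.F_sub hq⟩, ⟨f, hf⟩, hq⟩

theorem isMachineRecognizable_lang : IsMachineRecognizable A.Lang :=
  ⟨Set A.Q, A.Q, inferInstance, inferInstance, A.subsetMachine, subsetMachine_lang hR hneq⟩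

end Simulation

end NRA

/-- Every language in the Boolean closure of the languages of
one-register NRAs without disequality guards is recognized by a deterministic RsA. -/
theorem boolean_closure_nra_eq_one_to_drsa (Sigma : Type) [Fintype Sigma]
    [Nonempty Sigma] (L : Set (DataWord Sigma)) (hL : BoolClosureNRAeq1 Sigma L) :
    ∃ D : RsA Sigma, D.Deterministic ∧ RsA.Lang D = L := by
  suffices h : IsMachineRecognizable L from h.exists_deterministic_rsA
  induction hL with
  | base A hreg hneq => exact NRA.isMachineRecognizable_lang hreg hneq
  | union _ _ h₁ h₂ => exact h₁.union h₂
  | inter _ _ h₁ h₂ => exact h₁.inter h₂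
  | compl _ h => exact h.compl
end

section
/- For every register set automaton with register emptiness test A, there exists an ordinary register set automaton A' (with the same set of registers) such that L(A') = L(A). -/
/-- A transition of an RsA with register emptiness test: additionally carries the
set `gEmp` of registers that must be empty for the transition to fire. -/
structure RsAETrans (Sigma : Type) where
  src : ℕ
  letter : Sigma
  gIn : Finset ℕ
  gNin : Finset ℕ
  gEmp : Finset ℕ
  upd : ℕ → Finset (Option ℕ)
  tgt : ℕ

/-- The register assignment obtained after taking transition `t` with current input
data value `d`, starting from the assignment `f`. -/
def RsAETrans.apply {Sigma : Type} (t : RsAETrans Sigma) (f : ℕ → Finset ℕ) (d : ℕ) :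
    ℕ → Finset ℕ := fun r =>
  (t.upd r).biUnion fun o =>
    match o with
    | none => {d}
    | some r' => f r'

/-- An RsA with register emptiness test. -/
structure RsAE (Sigma : Type) where
  Q : Finset ℕ
  R : Finset ℕ
  Δ : Set (RsAETrans Sigma)
  I : Finset ℕ
  F : Finset ℕ
  finite_trans : Δ.Finite
  I_sub : I ⊆ Q
  F_sub : F ⊆ Q
  wf : ∀ t ∈ Δ, t.src ∈ Q ∧ t.tgt ∈ Q ∧ t.gIn ⊆ R ∧ t.gNin ⊆ R ∧ t.gEmp ⊆ R ∧
    Disjoint t.gIn t.gNin ∧ ∀ r ∈ R, ∀ r' : ℕ, some r' ∈ t.upd r → r' ∈ R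

/-- One step of an RsA with register emptiness test. -/
def RsAE.Step {Sigma : Type} (A : RsAE Sigma) (c : ℕ × (ℕ → Finset ℕ)) (x : Sigma × ℕ)
    (c' : ℕ × (ℕ → Finset ℕ)) : Prop :=
  ∃ t ∈ A.Δ, t.src = c.1 ∧ t.letter = x.1 ∧
    (∀ r ∈ t.gIn, x.2 ∈ c.2 r) ∧ (∀ r ∈ t.gNin, x.2 ∉ c.2 r) ∧
    (∀ r ∈ t.gEmp, c.2 r = ∅) ∧
    c' = (t.tgt, t.apply c.2 x.2)

/-- Runs of an RsA with register emptiness test. -/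
inductive RsAE.Run {Sigma : Type} (A : RsAE Sigma) :
    (ℕ × (ℕ → Finset ℕ)) → DataWord Sigma → (ℕ × (ℕ → Finset ℕ)) → Prop where
  | nil (c : ℕ × (ℕ → Finset ℕ)) : RsAE.Run A c [] c
  | cons {c c' c'' : ℕ × (ℕ → Finset ℕ)} {x : Sigma × ℕ} {w : DataWord Sigma} :
      A.Step c x c' → RsAE.Run A c' w c'' → RsAE.Run A c (x :: w) c''

/-- The language of an RsA with register emptiness test. -/
def RsAE.Lang {Sigma : Type} (A : RsAE Sigma) : Set (DataWord Sigma) :=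
  { w | ∃ q₀ ∈ A.I, ∃ c : ℕ × (ℕ → Finset ℕ),
      A.Run (q₀, fun _ => ∅) w c ∧ c.1 ∈ A.F }

/-!
Whether a register is empty after a step depends only on the transition taken and on which
registers were empty before it. Hence an ordinary automaton can keep the set `S` of nonempty
registers in its finite control, starting from `S = ∅`, and an emptiness guard `g` becomes the
condition `Disjoint g S` on the states in which a transition is available.
-/

/-- The registers of `R` holding at least one value: the information about a register assignment
that the simulating automaton stores in its states. -/
def nonemptyRegs (R : Finset ℕ) (f : ℕ → Finset ℕ) : Finset ℕ :=
  {r ∈ R | (f r).Nonempty}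

theorem mem_nonemptyRegs {R : Finset ℕ} {f : ℕ → Finset ℕ} {r : ℕ} :
    r ∈ nonemptyRegs R f ↔ r ∈ R ∧ (f r).Nonempty :=
  Finset.mem_filter

theorem nonemptyRegs_subset (R : Finset ℕ) (f : ℕ → Finset ℕ) : nonemptyRegs R f ⊆ R :=
  Finset.filter_subset _ _

theorem nonemptyRegs_empty (R : Finset ℕ) : nonemptyRegs R (fun _ => ∅) = ∅ := by
  simp [nonemptyRegs]

theorem disjoint_nonemptyRegs_iff {R s : Finset ℕ} (hs : s ⊆ R) (f : ℕ → Finset ℕ) :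
    Disjoint s (nonemptyRegs R f) ↔ ∀ r ∈ s, f r = ∅ := by
  rw [Finset.disjoint_left]
  refine forall₂_congr fun r hr => ?_
  rw [mem_nonemptyRegs, and_iff_right (hs hr), Finset.not_nonempty_iff_eq_empty]

/-- The state of the simulating automaton that stands for the state `q` together with the set `S`
of nonempty registers, coded as a natural number because the states of an `RsA` are. -/
def pairState (q : ℕ) (S : Finset ℕ) : ℕ :=
  Encodable.encode (q, S)

theorem pairState_inj {q q' : ℕ} {S S' : Finset ℕ} :
    pairState q S = pairState q' S' ↔ q = q' ∧ S = S' :=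
  Encodable.encode_inj.trans Prod.mk_inj

/-- The configuration of the simulating automaton that corresponds to the configuration `c` of an
automaton with registers `R` and emptiness test. -/
def liftConfig (R : Finset ℕ) (c : ℕ × (ℕ → Finset ℕ)) : ℕ × (ℕ → Finset ℕ) :=
  (pairState c.1 (nonemptyRegs R c.2), c.2)

theorem liftConfig_empty (R : Finset ℕ) (q : ℕ) :
    liftConfig R (q, fun _ => ∅) = (pairState q ∅, fun _ => ∅) := by
  rw [liftConfig, nonemptyRegs_empty]

namespace RsAETrans

variable {Sigma : Type}

/-- The registers of `R` that are nonempty after the transition `t` if exactly those of `S` are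
nonempty before it. Here `insertNone S` adds the input value, which is always available, to `S`. -/
def nextNonempty (t : RsAETrans Sigma) (R S : Finset ℕ) : Finset ℕ :=
  {r ∈ R | ∃ o ∈ t.upd r, o ∈ Finset.insertNone S}

theorem apply_nonempty (t : RsAETrans Sigma) (f : ℕ → Finset ℕ) (d r : ℕ) :
    (t.apply f d r).Nonempty ↔ ∃ o ∈ t.upd r, ∀ r' ∈ o, (f r').Nonempty := by
  rw [apply, Finset.biUnion_nonempty]
  refine exists_congr fun o => and_congr_right fun _ => ?_
  cases o <;> simp

theorem nonemptyRegs_apply {t : RsAETrans Sigma} {R : Finset ℕ}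
    (hR : ∀ r ∈ R, ∀ r' : ℕ, some r' ∈ t.upd r → r' ∈ R) (f : ℕ → Finset ℕ) (d : ℕ) :
    nonemptyRegs R (t.apply f d) = t.nextNonempty R (nonemptyRegs R f) := by
  refine Finset.filter_congr fun r hr => ?_
  rw [apply_nonempty]
  refine exists_congr fun o => and_congr_right fun ho => ?_
  rw [Finset.mem_insertNone]
  refine forall₂_congr fun r' hr' => ?_
  obtain rfl : o = some r' := hr'
  rw [mem_nonemptyRegs, and_iff_right (hR r hr r' ho)]

/-- The copy of the transition `t` that the simulating automaton uses when `S` is the set of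
nonempty registers. -/
def trackNonempty (t : RsAETrans Sigma) (R S : Finset ℕ) : RsATrans Sigma where
  src := pairState t.src S
  letter := t.letter
  gIn := t.gIn
  gNin := t.gNin
  upd := t.upd
  tgt := pairState t.tgt (t.nextNonempty R S)

theorem liftConfig_apply {t : RsAETrans Sigma} {R : Finset ℕ}
    (hR : ∀ r ∈ R, ∀ r' : ℕ, some r' ∈ t.upd r → r' ∈ R) (f : ℕ → Finset ℕ) (d : ℕ) :
    liftConfig R (t.tgt, t.apply f d) =
      ((t.trackNonempty R (nonemptyRegs R f)).tgt,
        (t.trackNonempty R (nonemptyRegs R f)).apply f d) := by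
  rw [liftConfig, nonemptyRegs_apply hR]
  rfl

end RsAETrans

theorem RsA.run_nil_iff {Sigma : Type} {A : RsA Sigma} {c c' : ℕ × (ℕ → Finset ℕ)} :
    A.Run c [] c' ↔ c = c' := by
  constructor
  · rintro ⟨⟩
    rfl
  · rintro rfl
    exact .nil c

theorem RsA.run_cons_iff {Sigma : Type} {A : RsA Sigma} {c c'' : ℕ × (ℕ → Finset ℕ)}
    {x : Sigma × ℕ} {w : DataWord Sigma} :
    A.Run c (x :: w) c'' ↔ ∃ c', A.Step c x c' ∧ A.Run c' w c'' := by
  constructor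
  · rintro (_ | ⟨hstep, hrun⟩)
    exact ⟨_, hstep, hrun⟩
  · rintro ⟨c', hstep, hrun⟩
    exact .cons hstep hrun

namespace RsAE

variable {Sigma : Type}

theorem run_nil_iff {A : RsAE Sigma} {c c' : ℕ × (ℕ → Finset ℕ)} :
    A.Run c [] c' ↔ c = c' := by
  constructor
  · rintro ⟨⟩
    rfl
  · rintro rfl
    exact .nil c

theorem run_cons_iff {A : RsAE Sigma} {c c'' : ℕ × (ℕ → Finset ℕ)}
    {x : Sigma × ℕ} {w : DataWord Sigma} :
    A.Run c (x :: w) c'' ↔ ∃ c', A.Step c x c' ∧ A.Run c' w c'' := by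
  constructor
  · rintro (_ | ⟨hstep, hrun⟩)
    exact ⟨_, hstep, hrun⟩
  · rintro ⟨c', hstep, hrun⟩
    exact .cons hstep hrun

theorem run_iff_of_step_iff {A : RsAE Sigma} {B : RsA Sigma}
    {φ : ℕ × (ℕ → Finset ℕ) → ℕ × (ℕ → Finset ℕ)}
    (hstep : ∀ c x c', B.Step (φ c) x c' ↔ ∃ c₁, A.Step c x c₁ ∧ φ c₁ = c')
    (c : ℕ × (ℕ → Finset ℕ)) (w : DataWord Sigma) (c' : ℕ × (ℕ → Finset ℕ)) :
    B.Run (φ c) w c' ↔ ∃ c₁, A.Run c w c₁ ∧ φ c₁ = c' := by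
  induction w generalizing c with
  | nil => simp only [RsA.run_nil_iff, run_nil_iff, exists_eq_left']
  | cons x w ih =>
    calc B.Run (φ c) (x :: w) c'
      _ ↔ ∃ c₁, A.Step c x c₁ ∧ B.Run (φ c₁) w c' := by
        simp only [RsA.run_cons_iff, hstep, exists_exists_and_eq_and]
      _ ↔ ∃ c₂, A.Run c (x :: w) c₂ ∧ φ c₂ = c' := by
        simp only [ih, run_cons_iff]
        tauto

/-- The `RsA` simulating `A`: it tracks the set of nonempty registers in its states, and only the
transitions whose emptiness test succeeds on the tracked set are kept. -/
def toRsA (A : RsAE Sigma) : RsA Sigma where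
  Q := Finset.image₂ pairState A.Q A.R.powerset
  R := A.R
  Δ := {t' | ∃ t ∈ A.Δ, ∃ S ⊆ A.R, Disjoint t.gEmp S ∧ t.trackNonempty A.R S = t'}
  I := Finset.image₂ pairState A.I {∅}
  F := Finset.image₂ pairState A.F A.R.powerset
  finite_trans := by
    refine (A.finite_trans.image2 (fun t S => t.trackNonempty A.R S)
      A.R.powerset.finite_toSet).subset ?_
    rintro _ ⟨t, ht, S, hS, -, rfl⟩
    exact Set.mem_image2_of_mem ht (Finset.mem_powerset.2 hS)
  I_sub := Finset.image₂_subset A.I_sub (by simp)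
  F_sub := Finset.image₂_subset_right A.F_sub
  wf := by
    rintro _ ⟨t, ht, S, hS, -, rfl⟩
    obtain ⟨hsrc, htgt, hgIn, hgNin, -, hdisj, hupd⟩ := A.wf t ht
    have hnext : t.nextNonempty A.R S ⊆ A.R := Finset.filter_subset _ _
    exact ⟨Finset.mem_image₂_of_mem hsrc (Finset.mem_powerset.2 hS),
      Finset.mem_image₂_of_mem htgt (Finset.mem_powerset.2 hnext), hgIn, hgNin, hdisj, hupd⟩

theorem mem_toRsA_I {A : RsAE Sigma} {q : ℕ} :
    q ∈ A.toRsA.I ↔ ∃ q₀ ∈ A.I, pairState q₀ ∅ = q := by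
  simp [toRsA]

theorem liftConfig_fst_mem_toRsA_F {A : RsAE Sigma} {c : ℕ × (ℕ → Finset ℕ)} :
    (liftConfig A.R c).1 ∈ A.toRsA.F ↔ c.1 ∈ A.F := by
  simp [toRsA, liftConfig, pairState_inj, nonemptyRegs_subset]

theorem toRsA_step_liftConfig_iff (A : RsAE Sigma) (c : ℕ × (ℕ → Finset ℕ)) (x : Sigma × ℕ)
    (c' : ℕ × (ℕ → Finset ℕ)) :
    A.toRsA.Step (liftConfig A.R c) x c' ↔ ∃ c₁, A.Step c x c₁ ∧ liftConfig A.R c₁ = c' := by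
  constructor
  · rintro ⟨_, ⟨t, ht, S, -, hdisj, rfl⟩, hsrc, hletter, hgIn, hgNin, rfl⟩
    obtain ⟨-, -, -, -, hgEmp, -, hupd⟩ := A.wf t ht
    obtain ⟨hq, rfl⟩ := pairState_inj.1 hsrc
    exact ⟨_, ⟨t, ht, hq, hletter, hgIn, hgNin, (disjoint_nonemptyRegs_iff hgEmp _).1 hdisj, rfl⟩,
      RsAETrans.liftConfig_apply hupd _ _⟩
  · rintro ⟨_, ⟨t, ht, hq, hletter, hgIn, hgNin, hempty, rfl⟩, rfl⟩
    obtain ⟨-, -, -, -, hgEmp, -, hupd⟩ := A.wf t ht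
    have hdisj := (disjoint_nonemptyRegs_iff hgEmp c.2).2 hempty
    exact ⟨_, ⟨t, ht, _, nonemptyRegs_subset _ _, hdisj, rfl⟩, pairState_inj.2 ⟨hq, rfl⟩,
      hletter, hgIn, hgNin, RsAETrans.liftConfig_apply hupd _ _⟩

theorem toRsA_run_liftConfig_iff (A : RsAE Sigma) (c : ℕ × (ℕ → Finset ℕ)) (w : DataWord Sigma)
    (c' : ℕ × (ℕ → Finset ℕ)) :
    A.toRsA.Run (liftConfig A.R c) w c' ↔ ∃ c₁, A.Run c w c₁ ∧ liftConfig A.R c₁ = c' :=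
  run_iff_of_step_iff A.toRsA_step_liftConfig_iff c w c'

theorem toRsA_lang (A : RsAE Sigma) : A.toRsA.Lang = A.Lang := by
  ext w
  calc w ∈ A.toRsA.Lang
    _ ↔ ∃ q₀ ∈ A.I, ∃ c', A.toRsA.Run (liftConfig A.R (q₀, fun _ => ∅)) w c' ∧
          c'.1 ∈ A.toRsA.F := by
      simp only [RsA.Lang, Set.mem_ofPred_eq, mem_toRsA_I, exists_exists_and_eq_and,
        liftConfig_empty]
    _ ↔ ∃ q₀ ∈ A.I, ∃ c, A.Run (q₀, fun _ => ∅) w c ∧ (liftConfig A.R c).1 ∈ A.toRsA.F := by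
      simp only [toRsA_run_liftConfig_iff, exists_exists_and_eq_and]
    _ ↔ w ∈ A.Lang := by
      simp only [liftConfig_fst_mem_toRsA_F, Lang, Set.mem_ofPred_eq]

end RsAE

theorem rsae_to_rsa_general (Sigma : Type) (A : RsAE Sigma) :
    ∃ A' : RsA Sigma, A'.R = A.R ∧ RsA.Lang A' = RsAE.Lang A :=
  ⟨A.toRsA, rfl, A.toRsA_lang⟩

/-- Every RsA with register emptiness test can be converted to an
ordinary RsA with the same set of registers and the same language. -/
theorem rsae_to_rsa (Sigma : Type) [Fintype Sigma] [Nonempty Sigma] (A : RsAE Sigma) :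
    ∃ A' : RsA Sigma, A'.R = A.R ∧ RsA.Lang A' = RsAE.Lang A :=
  rsae_to_rsa_general Sigma A
end
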